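/- Let α_1,…,α_n, β_1,…,β_n ∈ ℂ with Re(β_i − α_i) > 0 for each i, and let H = h_{α_1,β_1} ∗ ⋯ ∗ h_{α_n,β_n} be the n-fold convolution over ℝ. Then H is infinitely differentiable at every point of ℝ ∖ {−n/2 + k : k = 0, 1, …, n}. -/

import Mathlib

open Complex Filter Set Finset MeasureTheory
open scoped Real

noncomputable section

/-- The function `h_{α,β}(φ) = e^{2πiαφ}(1 + e^{2πiφ})^{β-α}/Γ(β-α+1)` on `(-1/2, 1/2)`,
extended by `0` (principal branch power). -/
def hfun (α β : ℂ) : ℝ → ℂ := fun φ =>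
  if φ ∈ Set.Ioo (-(1 : ℝ) / 2) ((1 : ℝ) / 2) then
    Complex.exp (2 * (π : ℂ) * Complex.I * α * (φ : ℂ)) *
      (1 + Complex.exp (2 * (π : ℂ) * Complex.I * (φ : ℂ))) ^ (β - α) /
        Complex.Gamma (β - α + 1)
  else 0

/-- Convolution over `ℝ`: `(f ∗ g)(x) = ∫ f(x - y) g(y) dy`. -/
def conv (f g : ℝ → ℂ) : ℝ → ℂ := fun x => ∫ y : ℝ, f (x - y) * g y

/-- The iterated convolution `f₁ ∗ (f₂ ∗ (⋯ ∗ fₙ))` of a list of functions. -/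
def convList : List (ℝ → ℂ) → (ℝ → ℂ)
  | [] => fun _ => 0
  | [f] => f
  | f :: g :: rest => conv f (convList (g :: rest))

open scoped Topology Convolution ContDiff

/-- Integrable, compactly supported, smooth off `S`. -/
def Nice (f : ℝ → ℂ) (S : Finset ℝ) : Prop :=
  Integrable f ∧ HasCompactSupport f ∧ ∀ x, x ∉ S → ContDiffAt ℝ ((⊤ : ℕ∞) : WithTop ℕ∞) f x

lemma smooth_part {f : ℝ → ℂ} {S : Finset ℝ} (hf : Nice f S) {ε : ℝ} (hε : 0 < ε) :
    ∃ f1 : ℝ → ℂ, ContDiff ℝ ((⊤ : ℕ∞) : WithTop ℕ∞) f1 ∧ HasCompactSupport f1 ∧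
      ∀ x, (∀ a ∈ S, ε ≤ |x - a|) → f1 x = f x := by
  obtain ⟨_, hc, hs⟩ := hf
  let b : ∀ a : ℝ, ContDiffBump a := fun a => ⟨ε / 2, ε, by positivity, by linarith⟩
  let p : ℝ → ℝ := fun x => ∏ a ∈ S, (1 - b a x)
  have hp : ContDiff ℝ ((⊤ : ℕ∞) : WithTop ℕ∞) p :=
    contDiff_prod fun a _ => contDiff_const.sub (b a).contDiff
  refine ⟨fun x => (p x : ℂ) * f x, ?_, hc.mul_left, ?_⟩
  · rw [contDiff_iff_contDiffAt]
    intro x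
    by_cases hx : x ∈ S
    · have h0 : (fun x => (p x : ℂ) * f x) =ᶠ[𝓝 x] fun _ => 0 := by
        filter_upwards [(b x).eventuallyEq_one] with y hy
        have : p y = 0 := Finset.prod_eq_zero hx (by simp [hy])
        simp [this]
      exact contDiffAt_const.congr_of_eventuallyEq h0
    · exact (Complex.ofRealCLM.contDiff.contDiffAt.comp x hp.contDiffAt).mul (hs x hx)
  · intro x hx
    have : p x = 1 := Finset.prod_eq_one fun a ha => by
      rw [(b a).zero_of_le_dist (by simpa [b, Real.dist_eq] using hx a ha)]; simp
    simp [this]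

lemma conv_eq (f g : ℝ → ℂ) : conv f g = f ⋆[ContinuousLinearMap.mul ℝ ℂ, volume] g := by
  funext x
  rw [convolution_eq_swap]
  rfl

lemma nice_conv {f g : ℝ → ℂ} {S T U : Finset ℝ} (hf : Nice f S) (hg : Nice g T)
    (hU : ∀ a ∈ S, ∀ b ∈ T, a + b ∈ U) : Nice (conv f g) U := by
  refine ⟨?_, ?_, ?_⟩
  · rw [conv_eq]; exact hf.1.integrable_convolution _ hg.1
  · rw [conv_eq]; exact hf.2.1.convolution _ hg.2.1
  intro x hx
  obtain ⟨δ, hδ, hball⟩ : ∃ δ > 0, Metric.ball x δ ⊆ (U : Set ℝ)ᶜ :=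
    Metric.isOpen_iff.1 U.finite_toSet.isClosed.isOpen_compl x (by simpa using hx)
  obtain ⟨f1, hf1, hf1c, hf1e⟩ := smooth_part hf (ε := δ / 3) (by positivity)
  obtain ⟨g1, hg1, hg1c, hg1e⟩ := smooth_part hg (ε := δ / 3) (by positivity)
  have hf1i : Integrable f1 := hf1.continuous.integrable_of_hasCompactSupport hf1c
  have hf2i : Integrable (f - f1) := hf.1.sub hf1i
  let L := ContinuousLinearMap.mul ℝ ℂ
  have e1 : ConvolutionExists f1 g L volume :=
    hf1c.convolutionExists_left L hf1.continuous hg.1.locallyIntegrable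
  have e2 : ConvolutionExists (f - f1) g1 L volume :=
    hg1c.convolutionExists_right L hf2i.locallyIntegrable hg1.continuous
  have s1 : ContDiff ℝ ((⊤ : ℕ∞) : WithTop ℕ∞) (f1 ⋆[L, volume] g) :=
    hf1c.contDiff_convolution_left L hf1 hg.1.locallyIntegrable
  have s2 : ContDiff ℝ ((⊤ : ℕ∞) : WithTop ℕ∞) ((f - f1) ⋆[L, volume] g1) :=
    hg1c.contDiff_convolution_right L hf2i.locallyIntegrable hg1
  refine (s1.add s2).contDiffAt.congr_of_eventuallyEq ?_
  filter_upwards [Metric.ball_mem_nhds x (show 0 < δ / 3 by positivity)] with z hz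
  rw [convolution_eq_swap, convolution_eq_swap,
    ← integral_add (e1 z).integrable_swap (e2 z).integrable_swap]
  unfold conv
  congr 1
  funext y
  simp only [L, ContinuousLinearMap.mul_apply', Pi.sub_apply]
  have key : f1 (z - y) = f (z - y) ∨ g1 y = g y := by
    by_contra! hcon
    obtain ⟨h1, h2⟩ := hcon
    have h1' : ∃ a ∈ S, |z - y - a| < δ / 3 := by
      by_contra! hh; exact h1 (hf1e _ hh)
    have h2' : ∃ a ∈ T, |y - a| < δ / 3 := by
      by_contra! hh; exact h2 (hg1e _ hh)
    obtain ⟨a, ha, ha'⟩ := h1'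
    obtain ⟨b, hb, hb'⟩ := h2'
    refine hball (?_ : a + b ∈ Metric.ball x δ) (by simpa using hU a ha b hb)
    rw [Metric.mem_ball, Real.dist_eq] at *
    rw [abs_lt] at *
    constructor <;> linarith [ha'.1, ha'.2, hb'.1, hb'.2, hz.1, hz.2]
  rcases key with h | h <;> rw [h] <;> ring

lemma one_add_exp_mem {x : ℝ} (hx : x ∈ Set.Ioo (-(1 : ℝ) / 2) ((1 : ℝ) / 2)) :
    1 + Complex.exp (2 * (π : ℂ) * Complex.I * (x : ℂ)) ∈ slitPlane := by
  left
  have : (2 * (π : ℂ) * Complex.I * (x : ℂ)) = ((2 * π * x : ℝ) : ℂ) * Complex.I := by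
    push_cast; ring
  rw [this, Complex.add_re, Complex.exp_ofReal_mul_I_re, Complex.one_re]
  have hlt : Real.cos π < Real.cos |2 * π * x| := by
    apply Real.cos_lt_cos_of_nonneg_of_le_pi (abs_nonneg _) le_rfl
    rw [abs_lt]
    constructor <;> nlinarith [hx.1, hx.2, Real.pi_pos]
  rw [Real.cos_abs, Real.cos_pi] at hlt
  linarith

lemma hfun_support (α β : ℂ) {x : ℝ} (hx : x ∉ Set.Ioo (-(1 : ℝ) / 2) ((1 : ℝ) / 2)) :
    hfun α β x = 0 := if_neg hx

lemma hfun_bound (α β : ℂ) (h : 0 < (β - α).re) : ∃ C : ℝ, ∀ x, ‖hfun α β x‖ ≤ C := by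
  refine ⟨Real.exp (π * ‖α‖) * (2 ^ (β - α).re * Real.exp (π * |(β - α).im|)) /
    ‖Complex.Gamma (β - α + 1)‖, fun x => ?_⟩
  by_cases hx : x ∈ Set.Ioo (-(1 : ℝ) / 2) ((1 : ℝ) / 2)
  · unfold hfun
    rw [if_pos hx, norm_div, norm_mul]
    gcongr
    · rw [Complex.norm_exp]
      apply Real.exp_le_exp.2
      refine (Complex.re_le_norm _).trans ?_
      simp only [norm_mul, Complex.norm_I, Complex.norm_real, Real.norm_eq_abs, abs_of_pos Real.pi_pos,
        Complex.norm_ofNat]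
      have : |x| ≤ 1 / 2 := abs_le.2 ⟨by linarith [hx.1], hx.2.le⟩
      have h2 : 0 ≤ π * ‖α‖ := by positivity
      nlinarith
    · refine (Complex.norm_cpow_le _ _).trans ?_
      rw [div_eq_mul_inv, ← Real.exp_neg]
      gcongr
      · refine (norm_add_le _ _).trans ?_
        have : (2 * (π : ℂ) * Complex.I * (x : ℂ)) = ((2 * π * x : ℝ) : ℂ) * Complex.I := by
          push_cast; ring
        rw [this, Complex.norm_exp_ofReal_mul_I]
        norm_num
      · refine (neg_le_abs _).trans ?_
        rw [abs_mul]
        gcongr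
        exact Complex.abs_arg_le_pi _
  · rw [hfun_support α β hx, norm_zero]
    positivity

lemma hfun_measurable (α β : ℂ) : Measurable (hfun α β) := by
  unfold hfun
  refine Measurable.ite measurableSet_Ioo ?_ measurable_const
  fun_prop

lemma hfun_compact (α β : ℂ) : HasCompactSupport (hfun α β) :=
  HasCompactSupport.intro (isCompact_Icc (a := -(1 : ℝ) / 2) (b := (1 : ℝ) / 2)) fun x hx =>
    hfun_support α β fun hx' => hx (Set.Ioo_subset_Icc_self hx')

lemma hfun_nice (α β : ℂ) (h : 0 < (β - α).re) : Nice (hfun α β) {-(1 : ℝ) / 2, (1 : ℝ) / 2} := by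
  refine ⟨?_, hfun_compact α β, ?_⟩
  · obtain ⟨C, hC⟩ := hfun_bound α β h
    have hon : IntegrableOn (hfun α β) (Set.Icc (-(1 : ℝ) / 2) ((1 : ℝ) / 2)) :=
      Measure.integrableOn_of_bounded (M := C) (by simp)
        (hfun_measurable α β).aestronglyMeasurable (ae_of_all _ hC)
    rwa [integrableOn_iff_integrable_of_support_subset] at hon
    intro x hx
    by_contra hx'
    exact hx (hfun_support α β fun hx'' => hx' (Set.Ioo_subset_Icc_self hx''))
  · intro x hx
    simp only [Finset.mem_insert, Finset.mem_singleton, not_or] at hx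
    by_cases hI : x ∈ Set.Ioo (-(1 : ℝ) / 2) ((1 : ℝ) / 2)
    · have hev : hfun α β =ᶠ[𝓝 x] fun φ : ℝ =>
          (fun z : ℂ => Complex.exp (2 * (π : ℂ) * Complex.I * α * z) *
          (1 + Complex.exp (2 * (π : ℂ) * Complex.I * z)) ^ (β - α) /
          Complex.Gamma (β - α + 1)) (φ : ℂ) := by
        filter_upwards [isOpen_Ioo.mem_nhds hI] with y hy
        exact if_pos hy
      refine ContDiffAt.congr_of_eventuallyEq ?_ hev
      have han : AnalyticAt ℂ (fun z : ℂ => Complex.exp (2 * (π : ℂ) * Complex.I * α * z) *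
          (1 + Complex.exp (2 * (π : ℂ) * Complex.I * z)) ^ (β - α) /
          Complex.Gamma (β - α + 1)) (x : ℂ) := by
        simp only [div_eq_mul_inv]
        refine AnalyticAt.mul (AnalyticAt.mul (by fun_prop) ?_) analyticAt_const
        exact AnalyticAt.cpow (by fun_prop) analyticAt_const (one_add_exp_mem hI)
      exact (han.contDiffAt.restrict_scalars ℝ).comp x Complex.ofRealCLM.contDiff.contDiffAt
    · have hI' : x ∉ Set.Icc (-(1 : ℝ) / 2) ((1 : ℝ) / 2) := fun hh =>
        hI ⟨lt_of_le_of_ne hh.1 (Ne.symm hx.1), lt_of_le_of_ne hh.2 hx.2⟩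
      refine (contDiffAt_const (c := (0 : ℂ))).congr_of_eventuallyEq ?_
      filter_upwards [isClosed_Icc.isOpen_compl.mem_nhds hI'] with y hy
      exact hfun_support α β fun hy' => hy (Set.Ioo_subset_Icc_self hy')

/-- The exceptional set. -/
def exc (n : ℕ) : Finset ℝ := (Finset.range (n + 1)).image fun k : ℕ => -(n : ℝ) / 2 + (k : ℝ)

lemma nice_list (l : List (ℝ → ℂ)) (hl : l ≠ [])
    (h : ∀ f ∈ l, Nice f {-(1 : ℝ) / 2, (1 : ℝ) / 2}) : Nice (convList l) (exc l.length) := by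
  induction l with
  | nil => exact absurd rfl hl
  | cons f l ih =>
    cases l with
    | nil =>
      have h1 : exc 1 = {-(1 : ℝ) / 2, (1 : ℝ) / 2} := by
        ext x
        simp [exc, Finset.range_add_one]
        norm_num
        tauto
      simpa [convList, h1] using h f (by simp)
    | cons g l =>
      have h2 := ih (by simp) fun f' hf' => h f' (List.mem_cons_of_mem _ hf')
      refine nice_conv (h f (by simp)) h2 ?_
      intro a ha b hb
      simp only [exc, Finset.mem_image, Finset.mem_range] at hb ⊢
      obtain ⟨k, hk, rfl⟩ := hb
      simp only [Finset.mem_insert, Finset.mem_singleton] at ha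
      simp only [List.length_cons] at *
      rcases ha with rfl | rfl
      · exact ⟨k, by omega, by push_cast; ring⟩
      · exact ⟨k + 1, by omega, by push_cast; ring⟩

/-- For `α₁,…,αₙ,β₁,…,βₙ ∈ ℂ` with `Re(βᵢ - αᵢ) > 0`, the `n`-fold
convolution `H = h_{α₁,β₁} ∗ ⋯ ∗ h_{αₙ,βₙ}` is infinitely differentiable at every point of
`ℝ ∖ {-n/2 + k : k = 0, 1, …, n}`. -/
theorem convolution_smooth (n : ℕ) (hn : 1 ≤ n) (α β : Fin n → ℂ)
    (h : ∀ i, 0 < (β i - α i).re)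
    (H : ℝ → ℂ) (hH : H = convList (List.ofFn fun i => hfun (α i) (β i))) :
    ∀ φ : ℝ, (∀ k : ℕ, k ≤ n → φ ≠ -(n : ℝ) / 2 + (k : ℝ)) →
      ContDiffAt ℝ ((⊤ : ℕ∞) : WithTop ℕ∞) H φ := by
  intro φ hφ
  subst hH
  refine (nice_list (List.ofFn fun i => hfun (α i) (β i)) ?_ ?_).2.2 φ ?_
  · intro h0
    have := congrArg List.length h0
    simp at this
    omega
  · intro f hf
    obtain ⟨i, rfl⟩ := (List.mem_ofFn' _ _).1 hf
    exact hfun_nice _ _ (h i)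
  · rw [List.length_ofFn]
    simp only [exc, Finset.mem_image, Finset.mem_range, not_exists, not_and]
    intro k hk hk'
    exact hφ k (by omega) hk'.symm
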